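/- Let X be a topological space, Y a Hausdorff space, and Z a Hausdorff space. Let f : X × Y → Z be continuous, let x₀ ∈ X, y₀ ∈ Y, and set z₀ = f(x₀, y₀). Let W ⊆ Y be a compact set that is a neighborhood of y₀ and such that y₀ is the only point y ∈ W with f(x₀, y) = z₀. Then for every compact set K ⊆ interior(W) that is a neighborhood of y₀, there exists a neighborhood V of x₀ in X such that for all x ∈ V and all y ∈ W, f(x, y) = z₀ implies y ∈ K. -/

import Mathlib

/-- Fiber localization: solutions `y ∈ W` of `f (x, y) = z₀` stay inside any compact
neighborhood `K ⊆ interior W` of `y₀` for all `x` close enough to `x₀`. -/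
theorem fiber_localization
    {X Y Z : Type*} [TopologicalSpace X] [TopologicalSpace Y] [T2Space Y]
    [TopologicalSpace Z] [T2Space Z]
    (f : X × Y → Z) (hf : Continuous f) (x₀ : X) (y₀ : Y)
    (W : Set Y) (hWcomp : IsCompact W) (hWnhds : W ∈ nhds y₀)
    (huniq : ∀ y ∈ W, f (x₀, y) = f (x₀, y₀) → y = y₀) :
    ∀ K : Set Y, IsCompact K → K ⊆ interior W → K ∈ nhds y₀ →
      ∃ V ∈ nhds x₀, ∀ x ∈ V, ∀ y ∈ W, f (x, y) = f (x₀, y₀) → y ∈ K := by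
  intro K _ _ hK
  have h : ∀ᶠ x in nhds x₀, ∀ y ∈ W, f (x, y) = f (x₀, y₀) → y ∈ K := by
    apply hWcomp.eventually_forall_of_forall_eventually
    intro y hy
    by_cases hyy : y = y₀
    · subst hyy
      have h2 : ∀ᶠ z : X × Y in nhds (x₀, y), z.2 ∈ K :=
        continuous_snd.continuousAt.eventually_mem hK
      exact h2.mono fun z hz _ => hz
    · have hne : f (x₀, y) ≠ f (x₀, y₀) := fun e => hyy (huniq y hy e)
      have h2 : ∀ᶠ z : X × Y in nhds (x₀, y), f z ≠ f (x₀, y₀) :=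
        hf.continuousAt.eventually_ne hne
      exact h2.mono fun z hz e => absurd e hz
  exact ⟨_, h, fun x hx => hx⟩
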